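/- Fix an ordered multi-index A ⊆ {1,…,n} with A ≠ ∅ and A ≠ {1,…,n}. Then among the 2ⁿ basis elements e^B of Cl(p,q): exactly 2^{n−2} with |B| even commute with e^A, exactly 2^{n−2} with |B| odd commute with e^A, exactly 2^{n−2} with |B| even anticommute with e^A, and exactly 2^{n−2} with |B| odd anticommute with e^A. -/

import Mathlib

/-!
Since distinct generators anticommute, `e^A e^B = χ_A(B) e^B e^A` with
`χ_A(B) = ∏_{b ∈ B} (-1)^{|A ∖ {b}|}`; the elements `e^B` are invertible and `Cl(p, q)` is a
nontrivial real algebra, so `e^A` commutes with `e^B` when `χ_A(B) = 1` and anticommutes with it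
when `χ_A(B) = -1`.

Pair this sign with the parity of `|B|` into a product of weights
`w b = (-1, (-1)^{|A ∖ {b}|})` in `ℤˣ × ℤˣ`, taken over `b ∈ B`. Adding `b` to `B` or removing it
from `B` multiplies this product by `w b`, and is an involution on subsets, so the fibres over `v`
and over `v * w b` have equal size. If `a ∈ A` and `b ∉ A`, then `w a` and `w b` have different
second components, hence generate `ℤˣ × ℤˣ`; all four fibres therefore have the same size,
a quarter of `2ⁿ`. Such `a` and `b` exist exactly because `A` is neither empty nor everything.
-/

open CliffordAlgebra

/-- Diagonal metric with `p` entries `+1` and `q` entries `-1`. -/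
noncomputable def eta (p q : ℕ) : Fin (p + q) → ℝ :=
  fun a => if (a : ℕ) < p then 1 else -1

/-- The quadratic form of signature `(p, q)` on `ℝⁿ`, `n = p + q`. -/
noncomputable def Qpq (p q : ℕ) : QuadraticForm ℝ (Fin (p + q) → ℝ) :=
  QuadraticMap.weightedSumSquares ℝ (eta p q)

/-- The real Clifford algebra `Cl(p, q)`. -/
noncomputable abbrev Cl (p q : ℕ) : Type :=
  CliffordAlgebra (Qpq p q)

/-- The generator `e^a` of `Cl(p, q)`. -/
noncomputable def gen (p q : ℕ) (a : Fin (p + q)) : Cl p q :=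
  CliffordAlgebra.ι (Qpq p q) (Pi.single a 1)

/-- The basis element `e^A`: the product of the generators `e^a`, `a ∈ A`,
taken in increasing order (`e^∅ = 1`). -/
noncomputable def eB (p q : ℕ) (A : Finset (Fin (p + q))) : Cl p q :=
  ((A.sort (· ≤ ·)).map (gen p q)).prod

/-- The sign in `e^i e^j = ± e^j e^i`. -/
def swapSign {n : ℕ} (i j : Fin n) : ℤˣ := if i = j then 1 else -1

/-- The sign in `e^A e^b = ± e^b e^A`, namely `(-1)^{|A ∖ {b}|}`. -/
def genSign {n : ℕ} (A : Finset (Fin n)) (b : Fin n) : ℤˣ := ∏ a ∈ A, swapSign b a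

/-- The pair formed by the parity sign `(-1)^{|B|}` and the sign in `e^A e^B = ± e^B e^A`,
written as a product over `B`. -/
def signPair {n : ℕ} (A B : Finset (Fin n)) : ℤˣ × ℤˣ := ∏ b ∈ B, (-1, genSign A b)

lemma signPair_fst {n : ℕ} (A B : Finset (Fin n)) : (signPair A B).1 = (-1) ^ B.card := by
  simp [signPair, Prod.fst_prod]

lemma signPair_snd {n : ℕ} (A B : Finset (Fin n)) :
    (signPair A B).2 = ∏ b ∈ B, genSign A b := by
  simp [signPair, Prod.snd_prod]

lemma genSign_of_notMem {n : ℕ} {A : Finset (Fin n)} {b : Fin n} (hb : b ∉ A) :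
    genSign A b = (-1) ^ A.card := by
  rw [genSign, ← Finset.prod_const]
  refine Finset.prod_congr rfl fun a ha => if_neg ?_
  rintro rfl
  exact hb ha

lemma genSign_of_mem {n : ℕ} {A : Finset (Fin n)} {a : Fin n} (ha : a ∈ A) :
    genSign A a = -(-1) ^ A.card := by
  have h : genSign A a = genSign (A.erase a) a := by
    rw [genSign, ← Finset.mul_prod_erase A _ ha]
    simp [swapSign, genSign]
  rw [h, genSign_of_notMem (Finset.notMem_erase a A), ← Finset.card_erase_add_one ha, pow_succ]
  simp

section Commutation

lemma mul_list_prod_eq_smul {R ι : Type*} [Ring R] (g : ι → R) (c : ι → ℤˣ) (x : R)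
    (h : ∀ j, x * g j = c j • (g j * x)) (M : List ι) :
    x * (M.map g).prod = (M.map c).prod • ((M.map g).prod * x) := by
  induction M with
  | nil => simp
  | cons j M ih =>
    simp only [List.map_cons, List.prod_cons]
    rw [← mul_assoc, h, smul_mul_assoc, mul_assoc, ih, mul_smul_comm, smul_smul, mul_assoc]

lemma gen_mul_gen (p q : ℕ) (i j : Fin (p + q)) :
    gen p q i * gen p q j = swapSign i j • (gen p q j * gen p q i) := by
  unfold swapSign
  split_ifs with h
  · subst h
    simp
  · have ho : (Qpq p q).IsOrtho (Pi.single i 1) (Pi.single j 1) := by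
      rw [QuadraticMap.isOrtho_def]
      simp only [Qpq, QuadraticMap.weightedSumSquares_apply, ← Finset.sum_add_distrib]
      refine Finset.sum_congr rfl fun k _ => ?_
      by_cases hi : k = i
      · have hj : k ≠ j := fun hj => h (hi.symm.trans hj)
        simp [hi, h]
      · simp [hi]
    rw [gen, gen, ι_mul_ι_comm_of_isOrtho ho, Units.neg_smul, one_smul]

lemma eB_mul_gen (p q : ℕ) (A : Finset (Fin (p + q))) (b : Fin (p + q)) :
    eB p q A * gen p q b = genSign A b • (gen p q b * eB p q A) := by
  have h := mul_list_prod_eq_smul (gen p q) (swapSign b) (gen p q b) (gen_mul_gen p q b)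
    (A.sort (· ≤ ·))
  have hs : ((A.sort (· ≤ ·)).map (swapSign b)).prod = genSign A b := by
    rw [genSign, ← List.prod_toFinset _ (A.sort_nodup _), Finset.sort_toFinset]
  rw [hs] at h
  rw [eB, h, smul_smul, Int.units_mul_self, one_smul]

lemma eB_mul_eB (p q : ℕ) (A B : Finset (Fin (p + q))) :
    eB p q A * eB p q B = (signPair A B).2 • (eB p q B * eB p q A) := by
  rw [signPair_snd, ← B.sort_toFinset (· ≤ ·), List.prod_toFinset _ (B.sort_nodup _),
    Finset.sort_toFinset]
  exact mul_list_prod_eq_smul (gen p q) (genSign A) _ (eB_mul_gen p q A) _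

lemma isUnit_gen (p q : ℕ) (a : Fin (p + q)) : IsUnit (gen p q a) := by
  have h : gen p q a * gen p q a = algebraMap ℝ (Cl p q) (eta p q a) := by
    rw [gen, ι_sq_scalar]
    congr 1
    simp [Qpq, QuadraticMap.weightedSumSquares_apply, Pi.single_apply]
  have hu : IsUnit (gen p q a * gen p q a) := by
    rw [h]
    refine IsUnit.map _ (IsUnit.mk0 _ ?_)
    unfold eta
    split_ifs <;> norm_num
  exact ((Commute.refl _).isUnit_mul_iff.mp hu).1

lemma isUnit_eB (p q : ℕ) (A : Finset (Fin (p + q))) : IsUnit (eB p q A) := by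
  refine List.prod_isUnit fun x hx => ?_
  obtain ⟨a, -, rfl⟩ := List.mem_map.mp hx
  exact isUnit_gen p q a

/-- Commutation and anticommutation exclude each other: the products of basis elements are
invertible in a nontrivial algebra without 2-torsion. -/
lemma eB_mul_eB_ne_neg (p q : ℕ) (A B : Finset (Fin (p + q))) :
    eB p q B * eB p q A ≠ -(eB p q B * eB p q A) := by
  intro h
  have h2 : (2 : ℝ) • (eB p q B * eB p q A) = 0 := by
    rw [two_smul]
    exact eq_neg_iff_add_eq_zero.mp h
  exact ((isUnit_eB p q B).mul (isUnit_eB p q A)).ne_zero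
    ((smul_eq_zero_iff_right two_ne_zero).mp h2)

lemma commute_eB_iff (p q : ℕ) (A B : Finset (Fin (p + q))) :
    Commute (eB p q A) (eB p q B) ↔ (signPair A B).2 = 1 := by
  rw [commute_iff_eq, eB_mul_eB]
  rcases Int.units_eq_one_or (signPair A B).2 with h | h
  · simp [h]
  · simp [h, (eB_mul_eB_ne_neg p q A B).symm]

lemma anticommute_eB_iff (p q : ℕ) (A B : Finset (Fin (p + q))) :
    eB p q A * eB p q B = -(eB p q B * eB p q A) ↔ (signPair A B).2 = -1 := by
  rw [eB_mul_eB]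
  rcases Int.units_eq_one_or (signPair A B).2 with h | h
  · simp [h, eB_mul_eB_ne_neg p q A B]
  · simp [h]

end Commutation

lemma even_card_iff {n : ℕ} (A B : Finset (Fin n)) : Even B.card ↔ (signPair A B).1 = 1 := by
  rw [signPair_fst]
  rcases Nat.even_or_odd B.card with h | h
  · simp [h]
  · simp [h.neg_one_pow, Nat.not_even_iff_odd.mpr h]

lemma odd_card_iff {n : ℕ} (A B : Finset (Fin n)) : Odd B.card ↔ (signPair A B).1 = -1 := by
  rw [signPair_fst]
  rcases Nat.even_or_odd B.card with h | h
  · simp [h, Nat.not_odd_iff_even.mpr h]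
  · simp [h, h.neg_one_pow]

/-- The number of subsets `B` with prescribed parity and commutation signs relative to `A`. -/
def fibreCard {n : ℕ} (A : Finset (Fin n)) (v : ℤˣ × ℤˣ) : ℕ :=
  (Finset.univ.filter fun B => signPair A B = v).card

lemma signPair_symmDiff_singleton {n : ℕ} (A B : Finset (Fin n)) (b : Fin n) :
    signPair A (symmDiff B {b}) = signPair A B * (-1, genSign A b) := by
  by_cases hb : b ∈ B
  · have he : symmDiff B {b} = B.erase b := by
      ext x
      by_cases hx : x = b <;> simp [Finset.mem_symmDiff, hx, hb]
    have hw : ((-1, genSign A b) : ℤˣ × ℤˣ) * (-1, genSign A b) = 1 := by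
      ext <;> simp [Int.units_mul_self]
    rw [he, signPair, signPair, ← Finset.prod_erase_mul B _ hb, mul_assoc, hw, mul_one]
  · have he : symmDiff B {b} = insert b B := by
      ext x
      by_cases hx : x = b <;> simp [Finset.mem_symmDiff, hx, hb]
    rw [he, signPair, signPair, Finset.prod_insert hb, mul_comm]

lemma fibreCard_mul {n : ℕ} (A : Finset (Fin n)) (b : Fin n) (v : ℤˣ × ℤˣ) :
    fibreCard A (v * (-1, genSign A b)) = fibreCard A v := by
  symm
  refine Finset.card_equiv (Function.Involutive.toPerm (fun B => symmDiff B {b})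
    (fun B => symmDiff_symmDiff_cancel_right {b} B)) fun B => ?_
  rw [Finset.mem_filter_univ, Finset.mem_filter_univ]
  change _ ↔ signPair A (symmDiff B {b}) = _
  rw [signPair_symmDiff_singleton, mul_left_inj]

lemma fibreCard_eq {n : ℕ} {A : Finset (Fin n)} {a b : Fin n} (ha : a ∈ A) (hb : b ∉ A)
    (v : ℤˣ × ℤˣ) : fibreCard A v = fibreCard A 1 := by
  have h1 := fibreCard_mul A a
  have h2 := fibreCard_mul A b
  rw [genSign_of_mem ha] at h1
  rw [genSign_of_notMem hb] at h2
  obtain ⟨x, y⟩ := v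
  have e1 := h1 1
  have e2 := h2 1
  -- The product of the two weights is `(1, -1)`, the only nontrivial value neither of them takes.
  have e3 := h2 (1 * (-1, -(-1) ^ A.card))
  rw [e1] at e3
  rcases Int.units_eq_one_or ((-1) ^ A.card) with h | h <;> rw [h] at e1 e2 e3 <;>
  rcases Int.units_eq_one_or x with rfl | rfl <;>
  rcases Int.units_eq_one_or y with rfl | rfl <;>
  first
  | rfl
  | simpa using e1
  | simpa using e2
  | simpa using e3

lemma fibreCard_eq_two_pow {n : ℕ} (hn : 2 ≤ n) {A : Finset (Fin n)} (hA1 : A ≠ ∅)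
    (hA2 : A ≠ Finset.univ) (v : ℤˣ × ℤˣ) : fibreCard A v = 2 ^ (n - 2) := by
  obtain ⟨a, ha⟩ := Finset.nonempty_iff_ne_empty.mpr hA1
  obtain ⟨b, hb⟩ : ∃ b, b ∉ A := by
    by_contra! h
    exact hA2 (Finset.eq_univ_iff_forall.mpr h)
  have hsum : ∑ v : ℤˣ × ℤˣ, fibreCard A v = 2 ^ n := by
    unfold fibreCard
    rw [← Finset.card_eq_sum_card_fiberwise (fun _ _ => Finset.mem_coe.mpr (Finset.mem_univ _))]
    simp
  have hc : Fintype.card (ℤˣ × ℤˣ) = 4 := by simp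
  rw [Finset.sum_congr rfl fun v _ => fibreCard_eq ha hb v, Finset.sum_const, Finset.card_univ,
    hc, smul_eq_mul] at hsum
  obtain ⟨m, rfl⟩ := Nat.exists_eq_add_of_le hn
  rw [fibreCard_eq ha hb, Nat.add_sub_cancel_left]
  rw [pow_add] at hsum
  omega

lemma ncard_eq_fibreCard {n : ℕ} (A : Finset (Fin n)) (x y : ℤˣ) :
    {B | (signPair A B).1 = x ∧ (signPair A B).2 = y}.ncard = fibreCard A (x, y) := by
  rw [fibreCard, ← Set.ncard_coe_finset]
  congr 1
  ext B
  simp [Prod.ext_iff]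

/-- For a multi-index `A` with `A ≠ ∅` and `A ≠ {1,…,n}`, among the `2ⁿ` basis
elements `e^B`: exactly `2^{n−2}` with `|B|` even commute with `e^A`, exactly
`2^{n−2}` with `|B|` odd commute with `e^A`, exactly `2^{n−2}` with `|B|` even
anticommute with `e^A`, and exactly `2^{n−2}` with `|B|` odd anticommute with `e^A`. -/
theorem count_commuting_basis (p q : ℕ) (hn : 2 ≤ p + q)
    (A : Finset (Fin (p + q))) (hA1 : A ≠ ∅) (hA2 : A ≠ Finset.univ) :
    {B : Finset (Fin (p + q)) |
        Even B.card ∧ Commute (eB p q A) (eB p q B)}.ncard = 2 ^ (p + q - 2) ∧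
    {B : Finset (Fin (p + q)) |
        Odd B.card ∧ Commute (eB p q A) (eB p q B)}.ncard = 2 ^ (p + q - 2) ∧
    {B : Finset (Fin (p + q)) |
        Even B.card ∧ eB p q A * eB p q B = -(eB p q B * eB p q A)}.ncard =
      2 ^ (p + q - 2) ∧
    {B : Finset (Fin (p + q)) |
        Odd B.card ∧ eB p q A * eB p q B = -(eB p q B * eB p q A)}.ncard =
      2 ^ (p + q - 2) := by
  simp only [commute_eB_iff, anticommute_eB_iff, even_card_iff A, odd_card_iff A,
    ncard_eq_fibreCard, fibreCard_eq_two_pow hn hA1 hA2, and_self]
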